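/- There is an absolute constant C > 0 with the following property. Let q̂₁, q̂₂ be positive integers and m₁, m₂, n integers, and define the character sum 𝔠 = Σ_{β mod q̂₁q̂₂} S(m₁, β; q̂₁) · S(m₂, β; q̂₂) · e(βn/(q̂₁q̂₂)), where S(m, n; c) = Σ_{x mod c, gcd(x,c)=1} e((mx + n·x̄)/c) is the Kloosterman sum and x̄ denotes the inverse of x modulo c. Then |𝔠| ≤ C · q̂₁ · q̂₂ · gcd(q̂₁, q̂₂, n). -/

import Mathlib

open Complex Real

noncomputable def e (x : ℝ) : ℂ := Complex.exp (2 * Real.pi * Complex.I * x)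

/-- The Kloosterman sum `S(m,n;c) = Σ_{x mod c, (x,c)=1} e((mx + n·x̄)/c)`, where `x̄` is the
multiplicative inverse of `x` modulo `c`. -/
noncomputable def kloos (m n : ℤ) (c : ℕ) : ℂ :=
  ∑ x ∈ (Finset.range c).filter (fun x => Nat.gcd x c = 1),
    e (((m : ℝ) * (x : ℝ) + (n : ℝ) * ((((x : ZMod c)⁻¹).val : ℕ) : ℝ)) / (c : ℝ))

lemma e_add' (x y : ℝ) : e (x + y) = e x * e y := by
  unfold e; rw [← Complex.exp_add]; congr 1; push_cast; ring

lemma e_norm' (x : ℝ) : ‖e x‖ = 1 := by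
  unfold e
  have : 2 * (Real.pi : ℂ) * Complex.I * x = ((2 * Real.pi * x : ℝ) : ℂ) * Complex.I := by
    push_cast; ring
  rw [this, Complex.norm_exp_ofReal_mul_I]

lemma e_nat_mul' (b : ℕ) (x : ℝ) : e (b * x) = e x ^ b := by
  unfold e; rw [← Complex.exp_nat_mul]; congr 1; push_cast; ring

lemma e_int' (k : ℤ) : e (k : ℝ) = 1 := by
  unfold e
  rw [Complex.exp_eq_one_iff]
  exact ⟨k, by push_cast; ring⟩

/-- Orthogonality, as an upper bound. -/
lemma orth' (Q : ℕ) (hQ : 0 < Q) (k : ℤ) :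
    ‖∑ b ∈ Finset.range Q, e ((b : ℝ) * ((k : ℝ) / (Q : ℝ)))‖ ≤
      if (Q : ℤ) ∣ k then (Q : ℝ) else 0 := by
  have hQ' : (Q : ℝ) ≠ 0 := by positivity
  split_ifs with h
  · refine (norm_sum_le _ _).trans ?_
    simp [e_norm']
  · have h1 : e ((k : ℝ) / Q) ≠ 1 := by
      intro h1
      unfold e at h1
      rw [Complex.exp_eq_one_iff] at h1
      obtain ⟨n, hn⟩ := h1
      apply h
      have h2 : (((k : ℝ) / Q : ℝ) : ℂ) = ((n : ℝ) : ℂ) := by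
        have h3 : (2 * (Real.pi : ℂ) * Complex.I) ≠ 0 := Complex.two_pi_I_ne_zero
        apply mul_left_cancel₀ h3
        rw [hn]; push_cast; ring
      have h4 : (k : ℝ) / Q = n := Complex.ofReal_injective h2
      rw [div_eq_iff hQ'] at h4
      exact ⟨n, by rw [mul_comm]; exact_mod_cast h4⟩
    have h2 : e ((k : ℝ) / Q) ^ Q = 1 := by
      rw [← e_nat_mul', mul_div_cancel₀ _ hQ']; exact e_int' k
    simp only [e_nat_mul']
    rw [geom_sum_eq h1, h2]
    simp

lemma inv_inj' (q : ℕ) (x x' : ℕ) (hx : x < q) (hx' : x' < q) (h : Nat.gcd x q = 1)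
    (h' : Nat.gcd x' q = 1) (heq : ((x : ZMod q)⁻¹).val = ((x' : ZMod q)⁻¹).val) : x = x' := by
  have : NeZero q := ⟨by omega⟩
  have h1 := ZMod.val_injective q heq
  have a1 := ZMod.coe_mul_inv_eq_one x h
  have a2 := ZMod.coe_mul_inv_eq_one x' h'
  have h3 : (x : ZMod q) = x' := by
    calc (x : ZMod q) = x * (x' * (x' : ZMod q)⁻¹) := by rw [a2, mul_one]
      _ = x' * (x * (x : ZMod q)⁻¹) := by rw [h1]; ring
      _ = x' := by rw [a1, mul_one]
  rw [ZMod.natCast_eq_natCast_iff'] at h3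
  rwa [Nat.mod_eq_of_lt hx, Nat.mod_eq_of_lt hx'] at h3

lemma count_inj' (g a b : ℕ) (ha : 0 < a) (hb : 0 < b) (hg : 0 < g) (hab : Nat.Coprime a b)
    (n : ℤ) (u v u' v' : ℕ) (hv : v < g * b) (hv' : v' < g * b)
    (h : (((g * a) * (g * b) : ℕ) : ℤ) ∣ u * (g * b) + v * (g * a) + n)
    (h' : (((g * a) * (g * b) : ℕ) : ℤ) ∣ u' * (g * b) + v' * (g * a) + n)
    (hd : u / a = u' / a) : u = u' ∧ v = v' := by
  have h1 := dvd_sub h h'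
  have h2 : ((g : ℤ) * (g * a * b)) ∣ g * (((u : ℤ) - u') * b + (v - v') * a) := by
    have e1 : (g : ℤ) * (g * a * b) = (((g * a) * (g * b) : ℕ) : ℤ) := by push_cast; ring
    have e2 : (g : ℤ) * (((u : ℤ) - u') * b + (v - v') * a) =
      u * (g * b) + v * (g * a) + n - (u' * (g * b) + v' * (g * a) + n) := by ring
    rw [e1, e2]; exact h1
  have h3 : ((g : ℤ) * a * b) ∣ (((u : ℤ) - u') * b + (v - v') * a) :=
    Int.dvd_of_mul_dvd_mul_left (by positivity) h2
  have h4 : (a : ℤ) ∣ ((u : ℤ) - u') * b := by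
    have : (a : ℤ) ∣ (((u : ℤ) - u') * b + (v - v') * a) :=
      dvd_trans ⟨g * b, by ring⟩ h3
    exact (dvd_add_left (Dvd.intro_left _ rfl)).1 this
  have h5 : (a : ℤ) ∣ (u : ℤ) - u' :=
    IsCoprime.dvd_of_dvd_mul_right (Nat.isCoprime_iff_coprime.2 hab) h4
  have h6 : u % a = u' % a := ((Nat.modEq_iff_dvd).2 h5).symm
  have hu : u = u' := by
    rw [← Nat.div_add_mod u a, ← Nat.div_add_mod u' a, hd, h6]
  refine ⟨hu, ?_⟩
  subst hu
  have h7 : (a : ℤ) * (g * b) ∣ a * ((v : ℤ) - v') := by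
    convert h3 using 1 <;> ring
  have h8 : ((g * b : ℕ) : ℤ) ∣ (v : ℤ) - v' := by
    push_cast
    exact Int.dvd_of_mul_dvd_mul_left (by positivity) h7
  have h9 : v % (g * b) = v' % (g * b) := ((Nat.modEq_iff_dvd).2 h8).symm
  rwa [Nat.mod_eq_of_lt hv, Nat.mod_eq_of_lt hv'] at h9

lemma count' (q₁ q₂ : ℕ) (n : ℤ) (h₁ : 0 < q₁) (h₂ : 0 < q₂) :
    ((((Finset.range q₁).filter (fun x => Nat.gcd x q₁ = 1)) ×ˢ
      ((Finset.range q₂).filter (fun x => Nat.gcd x q₂ = 1))).filter (fun p : ℕ × ℕ =>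
        ((q₁ * q₂ : ℕ) : ℤ) ∣ (((p.1 : ZMod q₁)⁻¹).val : ℤ) * q₂
          + (((p.2 : ZMod q₂)⁻¹).val : ℤ) * q₁ + n)).card
      ≤ Int.gcd ((Int.gcd (q₁ : ℤ) (q₂ : ℤ) : ℤ)) n := by
  obtain ⟨g, a, b, hg, hab, rfl, rfl⟩ := Nat.exists_coprime' (Nat.gcd_pos_of_pos_left q₂ h₁)
  have ha : 0 < a := Nat.pos_of_mul_pos_right h₁
  have hb : 0 < b := Nat.pos_of_mul_pos_right h₂
  have hgcd : Int.gcd ((a * g : ℕ) : ℤ) ((b * g : ℕ) : ℤ) = g := by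
    rw [Int.gcd_natCast_natCast, Nat.gcd_mul_right, hab.gcd_eq_one, one_mul]
  rw [hgcd, mul_comm a g, mul_comm b g]
  have : NeZero (g * a) := ⟨by positivity⟩
  have : NeZero (g * b) := ⟨by positivity⟩
  by_cases hn : (g : ℤ) ∣ n
  · have : Int.gcd (g : ℤ) n = g := by
      have := Int.gcd_eq_natAbs_left hn
      simpa using this
    rw [this]
    conv_rhs => rw [← Finset.card_range g]
    refine Finset.card_le_card_of_injOn (fun p => ((p.1 : ZMod (g * a))⁻¹).val / a) ?_ ?_
    · intro p _
      simp only [Finset.coe_range, Set.mem_Iio]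
      rw [Nat.div_lt_iff_lt_mul ha]
      exact ZMod.val_lt _
    · rintro ⟨x, y⟩ hp ⟨x', y'⟩ hp' heq
      simp only [Finset.coe_filter, Finset.mem_product, Finset.mem_filter, Finset.mem_range,
        Set.mem_ofPred_eq] at hp hp' heq
      obtain ⟨⟨⟨hx, hx1⟩, hy, hy1⟩, hd⟩ := hp
      obtain ⟨⟨⟨hx', hx1'⟩, hy', hy1'⟩, hd'⟩ := hp'
      obtain ⟨e1, e2⟩ := count_inj' g a b ha hb hg hab n _ _ _ _ (ZMod.val_lt _) (ZMod.val_lt _)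
        (by exact_mod_cast hd) (by exact_mod_cast hd') heq
      rw [inv_inj' _ x x' hx hx' hx1 hx1' e1, inv_inj' _ y y' hy hy' hy1 hy1' e2]
  · rw [Finset.filter_false_of_mem]
    · simp
    · intro p _ hd
      apply hn
      have h1 : (g : ℤ) ∣ ((g * a * (g * b) : ℕ) : ℤ) := ⟨a * (g * b), by push_cast; ring⟩
      refine (dvd_add_right ?_).1 (h1.trans hd)
      exact dvd_add (Dvd.dvd.mul_left ⟨(b : ℤ), by push_cast; rfl⟩ _)
        (Dvd.dvd.mul_left ⟨(a : ℤ), by push_cast; rfl⟩ _)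

/-- Bound for the character sum
`𝔠 = Σ_{β mod q̂₁q̂₂} S(m₁,β;q̂₁) S(m₂,β;q̂₂) e(βn/(q̂₁q̂₂))`:
`|𝔠| ≤ C · q̂₁ q̂₂ · (q̂₁, q̂₂, n)`. -/
theorem stmt9 : ∃ C > 0, ∀ (q₁ q₂ : ℕ) (m₁ m₂ n : ℤ), 0 < q₁ → 0 < q₂ →
    ‖∑ β ∈ Finset.range (q₁ * q₂),
        kloos m₁ (β : ℤ) q₁ * kloos m₂ (β : ℤ) q₂ *
          e ((β : ℝ) * (n : ℝ) / ((q₁ : ℝ) * (q₂ : ℝ)))‖ ≤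
      C * (q₁ : ℝ) * (q₂ : ℝ) * ((Int.gcd ((Int.gcd (q₁ : ℤ) (q₂ : ℤ) : ℤ)) n : ℕ) : ℝ) := by
  refine ⟨1, one_pos, ?_⟩
  intro q₁ q₂ m₁ m₂ n h₁ h₂
  have h₁' : (q₁ : ℝ) ≠ 0 := by positivity
  have h₂' : (q₂ : ℝ) ≠ 0 := by positivity
  have key : ∑ β ∈ Finset.range (q₁ * q₂),
        kloos m₁ (β : ℤ) q₁ * kloos m₂ (β : ℤ) q₂ *
          e ((β : ℝ) * (n : ℝ) / ((q₁ : ℝ) * (q₂ : ℝ))) =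
      ∑ p ∈ ((Finset.range q₁).filter (fun x => Nat.gcd x q₁ = 1)) ×ˢ
        ((Finset.range q₂).filter (fun x => Nat.gcd x q₂ = 1)),
        e ((m₁ : ℝ) * (p.1 : ℝ) / q₁ + (m₂ : ℝ) * (p.2 : ℝ) / q₂) *
        ∑ β ∈ Finset.range (q₁ * q₂), e ((β : ℝ) *
          ((((((p.1 : ZMod q₁)⁻¹).val : ℤ) * q₂
          + (((p.2 : ZMod q₂)⁻¹).val : ℤ) * q₁ + n : ℤ) : ℝ) / ((q₁ * q₂ : ℕ) : ℝ))) := by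
    simp only [Finset.mul_sum]
    rw [Finset.sum_comm]
    refine Finset.sum_congr rfl fun β _ => ?_
    unfold kloos
    rw [Finset.sum_mul_sum, ← Finset.sum_product', Finset.sum_mul]
    refine Finset.sum_congr rfl fun p _ => ?_
    rw [← e_add', ← e_add', ← e_add']
    congr 1
    push_cast
    field_simp
    ring
  rw [key]
  refine (norm_sum_le _ _).trans ?_
  simp only [norm_mul, e_norm', one_mul]
  refine (Finset.sum_le_sum fun p _ => orth' (q₁ * q₂) (by positivity) _).trans ?_
  rw [← Finset.sum_filter, Finset.sum_const, nsmul_eq_mul, mul_comm]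
  push_cast
  refine mul_le_mul_of_nonneg_left ?_ (by positivity)
  have := count' q₁ q₂ n h₁ h₂
  push_cast at this
  exact_mod_cast this
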